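/- Let D > 0, let F : [0, D) → ℝ be C³ with F(0) = 0, F'(0) = 0, and F'(t), F''(t), F'''(t), and (F(t)/t)' all nonnegative on (0, D), and let r : ℂ² → ℝ be convex and Fréchet-differentiable. Define ρ(z) = F(x₁²) + r(z) for z = (z₁,z₂) with z₁ = x₁ + i y₁ and x₁² < D, and fix d with d² < D. Write ζ₁ = ξ₁ + i η₁ and z₁ = x₁ + i y₁. Then for each k ∈ {1, 2} there is a constant c > 0 such that: for all ζ, z ∈ ℂ² with |ξ₁| ≤ d, |x₁| ≤ d, ρ(ζ) − ρ(z) ≥ 0, and |ξ₁| ≤ |x₁ − ξ₁|, one has |Φ(ζ,z)|^k · |z − ζ| ≥ c·( ( |Im Φ(ζ,z)| + ρ(ζ) − ρ(z) + F(ξ₁²/2) )^k · ( |ξ₁| + |y₁ − η₁| ) + ( |Im Φ(ζ,z)| + ρ(ζ) − ρ(z) + F(x₁²/2) )^k · ( |x₁| + |y₁ − η₁| ) ). -/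

import Mathlib

open Complex Set

/-- The Wirtinger derivative `∂g/∂z₁` of a real-valued function `g` on `ℂ²`. -/
noncomputable def wirt1 (g : ℂ × ℂ → ℝ) (ζ : ℂ × ℂ) : ℂ :=
  (1 / 2 : ℂ) * (((fderiv ℝ g ζ) (1, 0) : ℝ) - Complex.I * ((fderiv ℝ g ζ) (Complex.I, 0) : ℝ))

/-- The Wirtinger derivative `∂g/∂z₂`. -/
noncomputable def wirt2 (g : ℂ × ℂ → ℝ) (ζ : ℂ × ℂ) : ℂ :=
  (1 / 2 : ℂ) * (((fderiv ℝ g ζ) (0, 1) : ℝ) - Complex.I * ((fderiv ℝ g ζ) (0, Complex.I) : ℝ))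

/-- The support function `Φ(ζ,z) = Σ_{j=1}^{2} (∂g/∂ζ_j)(ζ)·(ζ_j − z_j)`. -/
noncomputable def suppFn (g : ℂ × ℂ → ℝ) (ζ z : ℂ × ℂ) : ℂ :=
  wirt1 g ζ * (ζ.1 - z.1) + wirt2 g ζ * (ζ.2 - z.2)

/-- The Euclidean norm on `ℂ²`. -/
noncomputable def eNorm (w : ℂ × ℂ) : ℝ :=
  Real.sqrt (‖w.1‖ ^ 2 + ‖w.2‖ ^ 2)

lemma tangent_aux {S : Set ℝ} {f : ℝ → ℝ} {f' x y : ℝ} (hc : ConvexOn ℝ S f) (hx : x ∈ S)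
    (hy : y ∈ S) (h : HasDerivWithinAt f f' S x) : f x + f' * (y - x) ≤ f y := by
  rcases lt_trichotomy x y with hxy | hxy | hxy
  · have := hc.le_slope_of_hasDerivWithinAt hx hy hxy h
    rw [slope_def_field, le_div_iff₀ (by linarith)] at this
    linarith
  · subst hxy; simp
  · have := hc.slope_le_of_hasDerivWithinAt hy hx hxy h
    rw [slope_def_field, div_le_iff₀ (by linarith)] at this
    linarith

lemma tangent_r {r : ℂ × ℂ → ℝ} (hc : ConvexOn ℝ Set.univ r) (hd : Differentiable ℝ r)
    (ζ z : ℂ × ℂ) : r ζ - r z ≤ fderiv ℝ r ζ (ζ - z) := by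
  have h1 : ConvexOn ℝ Set.univ (fun t : ℝ => r (AffineMap.lineMap ζ z t)) := by
    have := hc.comp_affineMap (AffineMap.lineMap ζ z : ℝ →ᵃ[ℝ] ℂ × ℂ)
    rw [Set.preimage_univ] at this
    exact this
  have h2 : HasDerivAt (fun t : ℝ => r (AffineMap.lineMap ζ z t)) (fderiv ℝ r ζ (z - ζ)) 0 := by
    have h3 : HasDerivAt (fun t : ℝ => (AffineMap.lineMap ζ z t : ℂ × ℂ)) (z - ζ) 0 :=
      AffineMap.hasDerivAt_lineMap
    have h4 : HasFDerivAt r (fderiv ℝ r ζ) (AffineMap.lineMap ζ z (0:ℝ)) := by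
      simpa using (hd ζ).hasFDerivAt
    exact h4.comp_hasDerivAt 0 h3
  have := tangent_aux h1 (mem_univ 0) (mem_univ 1) h2.hasDerivWithinAt
  simp only [AffineMap.lineMap_apply_zero, AffineMap.lineMap_apply_one] at this
  have e : fderiv ℝ r ζ (ζ - z) = - fderiv ℝ r ζ (z - ζ) := by rw [← map_neg, neg_sub]
  linarith

lemma suppFn_re (g : ℂ × ℂ → ℝ) (ζ z : ℂ × ℂ) :
    2 * (suppFn g ζ z).re = fderiv ℝ g ζ (ζ - z) := by
  set L := fderiv ℝ g ζ with hL
  have e : ζ - z = (ζ.1 - z.1).re • ((1, 0) : ℂ × ℂ) + (ζ.1 - z.1).im • ((I, 0) : ℂ × ℂ)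
      + (ζ.2 - z.2).re • ((0, 1) : ℂ × ℂ) + (ζ.2 - z.2).im • ((0, I) : ℂ × ℂ) := by
    apply Prod.ext <;> apply Complex.ext <;> simp
  rw [e]
  simp only [map_add, map_smul]
  simp [suppFn, wirt1, wirt2, ← hL]
  ring

lemma key_aux (D : ℝ) (F F' F'' : ℝ → ℝ)
    (hF' : ∀ t ∈ Set.Ico 0 D, HasDerivWithinAt F (F' t) (Set.Ico 0 D) t)
    (hF'' : ∀ t ∈ Set.Ico 0 D, HasDerivWithinAt F' (F'' t) (Set.Ico 0 D) t)
    (hF''pos : ∀ t ∈ Set.Ioo 0 D, 0 ≤ F'' t) : ConvexOn ℝ (Set.Ico 0 D) F := by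
  apply convexOn_of_hasDerivWithinAt2_nonneg (f' := F') (f'' := F'') (convex_Ico 0 D)
  · exact fun t ht => (hF' t ht).continuousWithinAt
  · intro t ht
    exact (hF' t (interior_subset ht)).mono interior_subset
  · intro t ht
    exact (hF'' t (interior_subset ht)).mono interior_subset
  · intro t ht
    rw [interior_Ico] at ht
    exact hF''pos t ht

lemma fderiv_rho (D : ℝ) (F F' : ℝ → ℝ)
    (hF' : ∀ t ∈ Set.Ico 0 D, HasDerivWithinAt F (F' t) (Set.Ico 0 D) t)
    (r : ℂ × ℂ → ℝ) (hdiff : Differentiable ℝ r) (ρ : ℂ × ℂ → ℝ)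
    (hρ : ∀ z : ℂ × ℂ, (z.1.re) ^ 2 < D → ρ z = F ((z.1.re) ^ 2) + r z)
    (ζ v : ℂ × ℂ) (hζ : ζ.1.re ^ 2 < D) :
    fderiv ℝ ρ ζ v = F' (ζ.1.re ^ 2) * (2 * ζ.1.re * v.1.re) + fderiv ℝ r ζ v := by
  let U : Set (ℂ × ℂ) := {w | w.1.re ^ 2 < D}
  have hU : U ∈ nhds ζ := IsOpen.mem_nhds (isOpen_lt (by fun_prop) (by fun_prop)) hζ
  let R : ℂ × ℂ →L[ℝ] ℝ := Complex.reCLM.comp (ContinuousLinearMap.fst ℝ ℂ ℂ)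
  have hR : HasFDerivAt (fun w : ℂ × ℂ => w.1.re) R ζ := R.hasFDerivAt
  have hq : HasFDerivAt (fun w : ℂ × ℂ => w.1.re ^ 2) ((2 * ζ.1.re) • R) ζ := by
    simpa using hR.pow 2
  have h1 : HasFDerivWithinAt (fun w : ℂ × ℂ => F (w.1.re ^ 2))
      (F' (ζ.1.re ^ 2) • ((2 * ζ.1.re) • R)) U ζ :=
    HasDerivWithinAt.comp_hasFDerivWithinAt (t := Set.Ico 0 D) ζ (hF' _ ⟨sq_nonneg _, hζ⟩)
      hq.hasFDerivWithinAt (fun w hw => ⟨sq_nonneg _, hw⟩)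
  have h2 := (h1.hasFDerivAt hU).add (hdiff ζ).hasFDerivAt
  have h3 : HasFDerivAt ρ (F' (ζ.1.re ^ 2) • ((2 * ζ.1.re) • R) + fderiv ℝ r ζ) ζ :=
    h2.congr_of_eventuallyEq (Filter.eventually_of_mem hU (fun w hw => hρ w hw))
  rw [h3.fderiv]
  simp [R]

/-- Lemma 2.3, second case: lower bound for the support function of
`ρ(z) = F(x₁²) + r(z)` (real case) when `|ξ₁| ≤ |x₁ − ξ₁|`. -/
theorem stmt8 (D : ℝ) (hD : 0 < D) (F F' F'' F''' : ℝ → ℝ)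
    (hF : ContDiffOn ℝ 3 F (Set.Ico 0 D))
    (hF' : ∀ t ∈ Set.Ico 0 D, HasDerivWithinAt F (F' t) (Set.Ico 0 D) t)
    (hF'' : ∀ t ∈ Set.Ico 0 D, HasDerivWithinAt F' (F'' t) (Set.Ico 0 D) t)
    (hF''' : ∀ t ∈ Set.Ico 0 D, HasDerivWithinAt F'' (F''' t) (Set.Ico 0 D) t)
    (hF0 : F 0 = 0) (hF'0 : F' 0 = 0)
    (hF'pos : ∀ t ∈ Set.Ioo 0 D, 0 ≤ F' t)
    (hF''pos : ∀ t ∈ Set.Ioo 0 D, 0 ≤ F'' t)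
    (hF'''pos : ∀ t ∈ Set.Ioo 0 D, 0 ≤ F''' t)
    (hquot : ∀ t ∈ Set.Ioo 0 D, 0 ≤ deriv (fun s => F s / s) t)
    (r : ℂ × ℂ → ℝ) (hconv : ConvexOn ℝ Set.univ r) (hdiff : Differentiable ℝ r)
    (ρ : ℂ × ℂ → ℝ)
    (hρ : ∀ z : ℂ × ℂ, (z.1.re) ^ 2 < D → ρ z = F ((z.1.re) ^ 2) + r z)
    (d : ℝ) (hd : d ^ 2 < D) (k : ℕ) (hk : k = 1 ∨ k = 2) :
    ∃ c > (0 : ℝ), ∀ ζ z : ℂ × ℂ,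
      |ζ.1.re| ≤ d → |z.1.re| ≤ d → 0 ≤ ρ ζ - ρ z →
      |ζ.1.re| ≤ |z.1.re - ζ.1.re| →
      ‖suppFn ρ ζ z‖ ^ k * eNorm (z - ζ) ≥
        c * ((|(suppFn ρ ζ z).im| + ρ ζ - ρ z + F ((ζ.1.re) ^ 2 / 2)) ^ k *
              (|ζ.1.re| + |z.1.im - ζ.1.im|) +
            (|(suppFn ρ ζ z).im| + ρ ζ - ρ z + F ((z.1.re) ^ 2 / 2)) ^ k *
              (|z.1.re| + |z.1.im - ζ.1.im|)) := by
  have hc := key_aux D F F' F'' hF' hF'' hF''pos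
  have hF'nn : ∀ t ∈ Set.Ico 0 D, 0 ≤ F' t := by
    intro t ht
    rcases eq_or_lt_of_le ht.1 with h | h
    · rw [← h, hF'0]
    · exact hF'pos t ⟨h, ht.2⟩
  have htan : ∀ s ∈ Set.Ico 0 D, ∀ t ∈ Set.Ico 0 D, F s + F' s * (t - s) ≤ F t :=
    fun s hs t ht => tangent_aux hc hs ht (hF' s hs)
  have hmono : ∀ s ∈ Set.Ico 0 D, ∀ t ∈ Set.Ico 0 D, s ≤ t → F s ≤ F t := by
    intro s hs t ht hst
    have := htan s hs t ht
    have := mul_nonneg (hF'nn s hs) (sub_nonneg.2 hst)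
    linarith
  have h0 : (0:ℝ) ∈ Set.Ico 0 D := ⟨le_refl _, hD⟩
  refine ⟨1 / (5 * 9 ^ k), by positivity, ?_⟩
  intro ζ z hζd hzd hP hle
  set Φ := suppFn ρ ζ z with hΦ
  set x := z.1.re with hx
  set ξ := ζ.1.re with hξ
  have ha : ξ ^ 2 < D := lt_of_le_of_lt (sq_le_sq' (by linarith [abs_le.1 hζd]) (abs_le.1 hζd).2) hd
  have hb : x ^ 2 < D := lt_of_le_of_lt (sq_le_sq' (by linarith [abs_le.1 hzd]) (abs_le.1 hzd).2) hd
  have ha' : ξ ^ 2 ∈ Set.Ico 0 D := ⟨sq_nonneg _, ha⟩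
  have hb' : x ^ 2 ∈ Set.Ico 0 D := ⟨sq_nonneg _, hb⟩
  have ha2 : ξ ^ 2 / 2 ∈ Set.Ico 0 D := ⟨by positivity, by linarith [sq_nonneg ξ]⟩
  have hb2 : x ^ 2 / 2 ∈ Set.Ico 0 D := ⟨by positivity, by linarith [sq_nonneg x]⟩
  have hsq : ξ ^ 2 ≤ (x - ξ) ^ 2 := sq_le_sq.2 hle
  have habsx : |x| ≤ 2 * |x - ξ| := by
    have := abs_add_le (x - ξ) ξ
    rw [sub_add_cancel] at this
    linarith
  have hsqx : x ^ 2 ≤ 4 * (x - ξ) ^ 2 := by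
    have : x ^ 2 ≤ (2 * (x - ξ)) ^ 2 := sq_le_sq.2 (by rwa [abs_mul, abs_two])
    linarith
  have hre : 2 * Φ.re = F' (ξ ^ 2) * (2 * ξ * (ξ - x)) + fderiv ℝ r ζ (ζ - z) := by
    rw [hΦ, suppFn_re, fderiv_rho D F F' hF' r hdiff ρ hρ ζ _ ha]
    simp [hx, hξ]
  have hr := tangent_r hconv hdiff ζ z
  have hρζ := hρ ζ ha
  have hρz := hρ z hb
  rw [← hξ] at hρζ
  rw [← hx] at hρz
  have hA := htan _ ha' _ hb'
  have h0a := htan _ ha' _ h0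
  have hn := hF'nn _ ha'
  have m1 := mul_le_mul_of_nonneg_left hsq hn
  have m2 := mul_le_mul_of_nonneg_left hsqx hn
  have fa := hmono _ ha2 _ ha' (by linarith [sq_nonneg ξ])
  have fb := hmono _ hb2 _ hb' (by linarith [sq_nonneg x])
  have fa0 := hmono _ h0 _ ha2 ha2.1
  have fb0 := hmono _ h0 _ hb2 hb2.1
  have n1 : Φ.re ≤ ‖Φ‖ := Complex.re_le_norm Φ
  have n2 : |Φ.im| ≤ ‖Φ‖ := Complex.abs_im_le_norm Φ
  have n3 := abs_nonneg Φ.im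
  have E1 : 2 * Φ.re ≥ (ρ ζ - ρ z) + (F (x ^ 2) - F (ξ ^ 2) - F' (ξ ^ 2) * (x ^ 2 - ξ ^ 2))
      + F' (ξ ^ 2) * (x - ξ) ^ 2 := by
    rw [hre, hρζ, hρz]
    linarith
  rw [hF0] at h0a fa0 fb0
  have B1 : |Φ.im| + ρ ζ - ρ z + F (ξ ^ 2 / 2) ≤ 9 * ‖Φ‖ := by linarith
  have B2 : |Φ.im| + ρ ζ - ρ z + F (x ^ 2 / 2) ≤ 9 * ‖Φ‖ := by linarith
  have N0 : ‖z.1 - ζ.1‖ ≤ eNorm (z - ζ) := by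
    apply Real.le_sqrt_of_sq_le
    simp only [Prod.fst_sub]
    linarith [sq_nonneg ‖(z - ζ).2‖]
  have N1 : |x - ξ| ≤ eNorm (z - ζ) := by
    refine le_trans ?_ N0
    simpa using Complex.abs_re_le_norm (z.1 - ζ.1)
  have N2 : |z.1.im - ζ.1.im| ≤ eNorm (z - ζ) := by
    refine le_trans ?_ N0
    simpa using Complex.abs_im_le_norm (z.1 - ζ.1)
  set N := eNorm (z - ζ) with hN
  have P1 := pow_le_pow_left₀ (by linarith) B1 k
  have P2 := pow_le_pow_left₀ (by linarith) B2 k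
  have Q1 := mul_le_mul P1 (show |ξ| + |z.1.im - ζ.1.im| ≤ 2 * N by linarith)
    (by positivity) (by positivity)
  have Q2 := mul_le_mul P2 (show |x| + |z.1.im - ζ.1.im| ≤ 3 * N by linarith)
    (by positivity) (by positivity)
  rw [ge_iff_le, one_div, inv_mul_le_iff₀ (by positivity)]
  rw [mul_pow] at Q1 Q2
  linarith
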